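/- Every computably approximable real is c.a. speedable: if a real α ∈ (0,1) has a computable approximation, then it has a computable approximation that is speedable. -/

import Mathlib

open Filter

/-- A computable approximation of a real `α`: a computable sequence of
rationals in `[0,1]` converging to `α`. -/
def IsCompApprox (a : ℕ → ℚ) (α : ℝ) : Prop :=
  Computable a ∧ (∀ s, a s ∈ Set.Icc (0 : ℚ) 1) ∧
    Tendsto (fun s => (a s : ℝ)) atTop (nhds α)

/-- A d.c.e. approximation: a computable approximation with bounded variation. -/
def IsDCEApprox (a : ℕ → ℚ) (α : ℝ) : Prop :=
  IsCompApprox a α ∧ Summable (fun s => |(a (s + 1) : ℝ) - (a s : ℝ)|)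

/-- A computable order: a nondecreasing unbounded computable function. -/
def IsComputableOrder (f : ℕ → ℕ) : Prop :=
  Computable f ∧ Monotone f ∧ Tendsto f atTop atTop

/-- The liminf (in the extended reals) of `|(α - a (f s)) / (α - a s)|`. -/
noncomputable def speedLiminf (a : ℕ → ℚ) (f : ℕ → ℕ) (α : ℝ) : EReal :=
  Filter.liminf (fun s => ((|(α - (a (f s) : ℝ)) / (α - (a s : ℝ))| : ℝ) : EReal)) atTop

/-- A computable approximation `a` of `α` is `ρ`-speedable. -/
def IsRhoSpeedable (a : ℕ → ℚ) (α : ℝ) (ρ : ℚ) : Prop :=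
  (∃ q : ℚ, α = (q : ℝ)) ∨
    ∃ f, IsComputableOrder f ∧ speedLiminf a f α ≤ (((ρ : ℝ) : EReal))

/-- A computable approximation is speedable if it is `ρ`-speedable for some rational
`ρ ∈ [0,1)`. -/
def IsSpeedable (a : ℕ → ℚ) (α : ℝ) : Prop :=
  ∃ ρ : ℚ, 0 ≤ ρ ∧ ρ < 1 ∧ IsRhoSpeedable a α ρ

/-- A Solovay test: computable sequences of rationals `l i ≤ r i` in `[0,1]`
with `Σ (r i - l i) < ∞`. -/
structure SolovayTest where
  l : ℕ → ℚ
  r : ℕ → ℚ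
  comp_l : Computable l
  comp_r : Computable r
  mem_l : ∀ i, l i ∈ Set.Icc (0 : ℚ) 1
  mem_r : ∀ i, r i ∈ Set.Icc (0 : ℚ) 1
  le : ∀ i, l i ≤ r i
  summable : Summable (fun i => (r i : ℝ) - (l i : ℝ))

/-- A real `γ` is covered by a Solovay test if `γ ∈ [l i, r i]` for infinitely many `i`. -/
def SolovayTest.Covers (T : SolovayTest) (γ : ℝ) : Prop :=
  ∃ᶠ i in atTop, γ ∈ Set.Icc (T.l i : ℝ) (T.r i : ℝ)

/-- The sequence of endpoints `l 0, r 0, l 1, r 1, …` of a Solovay test. -/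
def SolovayTest.endpoints (T : SolovayTest) (n : ℕ) : ℚ :=
  if n % 2 = 0 then T.l (n / 2) else T.r (n / 2)

/-!
Let `a` be a computable approximation of an irrational `α`, and let `m s ≤ s` count the initial
scales `N = 1, 4, 9, …` at which `⌊N * a s⌋ = ⌊N * a (s + 1)⌋`. Then `m` tends to infinity, and
there are infinitely many true stages `s`, those with `m s ≤ m t` for all `t ≥ s`. From a true stage
on, the floors at the first `m s` scales are frozen, hence `|α - a s| ≤ 1 / m s ^ 2`. The true
stages are not computable, but `m` is. So insert before each `a s` a decoy `c s` computed from `a s`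
and lying about `α / m s` below it. The decoys also tend to `α`, but at true stages the step from
`c s` to `a s` shrinks the error by a factor of order `1 / m s`, so the sequence
`c 0, a 0, c 1, a 1, …` is even `0`-speedable.
-/

section Computability

open Denumerable Encodable

theorem computable_of_graph {β γ : Type*} [Primcodable β] [Denumerable γ] {f : β → γ}
    (hf : ComputablePred fun p : β × γ => p.2 = f p.1) : Computable f := by
  classical
  have hex : ∀ x, ∃ n, ofNat γ n = f x := fun x => ⟨encode (f x), ofNat_encode _⟩
  have hcode : ComputablePred fun p : β × ℕ => ofNat γ p.2 = f p.1 :=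
    hf.computable_of_manyOneReducible
      ⟨_, Computable.fst.pair ((Computable.ofNat γ).comp Computable.snd), fun _ => Iff.rfl⟩
  exact ((Computable.ofNat γ).comp (Computable.find hcode hex)).of_eq fun x => Nat.find_spec (hex x)

theorem computable_subtype_ofNat {s : Set ℕ} [Infinite s] [DecidablePred (· ∈ s)]
    (hs : ComputablePred (· ∈ s)) : Computable fun n => (Nat.Subtype.ofNat s n : ℕ) := by
  have hex : ∀ y : ℕ, ∃ m, y + m + 1 ∈ s := fun y => by
    obtain ⟨b, hb, hlt⟩ := (Set.infinite_coe_iff.mp ‹Infinite s›).exists_gt y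
    obtain ⟨m, rfl⟩ := Nat.exists_eq_add_of_lt hlt
    exact ⟨m, hb⟩
  let : DecidableRel fun y m : ℕ => y + m + 1 ∈ s := fun y m => ‹DecidablePred (· ∈ s)› _
  have hadd : Computable fun p : ℕ × ℕ => p.1 + p.2 + 1 :=
    (Primrec.succ.comp Primrec.nat_add).to_comp
  have hnext : Computable fun y => y + Nat.find (hex y) + 1 :=
    hadd.comp (Computable.id.pair
      (Computable.find (hs.computable_of_manyOneReducible (.mk _ hadd)) hex))
  refine (Computable.nat_rec Computable.id (Computable.const ((⊥ : s) : ℕ))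
    (hnext.comp (Computable.snd.comp Computable.snd)).to₂).of_eq fun n => ?_
  induction n with
  | zero => rfl
  | succ n ih => exact congrArg (fun y => y + Nat.find (hex y) + 1) ih

theorem coprime_iff_forall_mem_range (m n : ℕ) :
    m.Coprime n ↔ ∀ k ∈ List.range (m + n + 1), k = 1 ∨ ¬(m % k = 0 ∧ n % k = 0) := by
  simp only [← Nat.dvd_iff_mod_eq_zero, or_iff_not_imp_right, not_not]
  refine ⟨fun h k _ hk => Nat.eq_one_of_dvd_coprimes h hk.1 hk.2, fun h => ?_⟩
  have hle : m.gcd n ≤ m + n := by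
    rcases n.eq_zero_or_pos with rfl | hn
    · simp
    · exact (Nat.gcd_le_right m hn).trans (Nat.le_add_left n m)
  exact h _ (List.mem_range.2 (Nat.lt_succ_of_le hle))
    ⟨Nat.gcd_dvd_left m n, Nat.gcd_dvd_right m n⟩

theorem primrecRel_coprime : PrimrecRel Nat.Coprime := by
  have hmod {f : ℕ × ℕ × ℕ → ℕ} (hf : Primrec f) : PrimrecPred fun q => f q % q.1 = 0 :=
    Primrec.eq.comp (Primrec.nat_mod.comp hf Primrec.fst) (Primrec.const 0)
  have hdvd : PrimrecRel fun (k : ℕ) (p : ℕ × ℕ) => k = 1 ∨ ¬(p.1 % k = 0 ∧ p.2 % k = 0) :=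
    (Primrec.eq.comp Primrec.fst (Primrec.const 1)).or
      ((hmod (Primrec.fst.comp Primrec.snd)).and (hmod (Primrec.snd.comp Primrec.snd))).not
  refine (hdvd.forall_mem_list.comp
    (Primrec.list_range.comp (Primrec.succ.comp Primrec.nat_add)) Primrec.id).of_eq fun p => ?_
  exact (coprime_iff_forall_mem_range p.1 p.2).symm

theorem primrec_int_natAbs : Primrec Int.natAbs := by
  refine (Primrec.nat_div.comp (Primrec.succ.comp Primrec.encode) (Primrec.const 2)).of_eq
    fun z => ?_
  cases z with
  | ofNat n => change (2 * n + 1) / 2 = n; lia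
  | negSucc n => change (2 * n + 1 + 1) / 2 = n + 1; lia

theorem primrecPred_int_nonneg : PrimrecPred fun z : ℤ => 0 ≤ z := by
  refine (Primrec.eq.comp (Primrec.nat_mod.comp Primrec.encode (Primrec.const 2))
    (Primrec.const 0)).of_eq fun z => ?_
  cases z with
  | ofNat n => change 2 * n % 2 = 0 ↔ 0 ≤ (n : ℤ); lia
  | negSucc n => change (2 * n + 1) % 2 = 0 ↔ 0 ≤ Int.negSucc n; lia

theorem primrec_int_toNat : Primrec Int.toNat := by
  refine (Primrec.ite primrecPred_int_nonneg primrec_int_natAbs (Primrec.const 0)).of_eq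
    fun z => ?_
  split_ifs <;> lia

/-- The code of a rational as the pair of its numerator and denominator. It is definitionally the
code of Mathlib's `Encodable ℚ`; the `Primcodable ℚ` behind `Computable` codes `q` instead by the
position of `ratCode q` within the range of `ratCode`. -/
def ratCode (q : ℚ) : ℕ := Nat.pair (encode q.num) q.den

theorem range_ratCode : Set.range ratCode =
    {n | 0 < n.unpair.2 ∧ (ofNat ℤ n.unpair.1).natAbs.Coprime n.unpair.2} := by
  ext n
  constructor
  · rintro ⟨q, rfl⟩
    simpa only [ratCode, Set.mem_ofPred_eq, Nat.unpair_pair, ofNat_encode] using ⟨q.pos, q.reduced⟩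
  · rintro ⟨hpos, hcop⟩
    exact ⟨⟨_, _, hpos.ne', hcop⟩, by simp only [ratCode, encode_ofNat, Nat.pair_unpair]⟩

theorem computablePred_mem_range_ratCode : ComputablePred (· ∈ Set.range ratCode) := by
  have hfst : Primrec fun n : ℕ => n.unpair.1 := Primrec.fst.comp Primrec.unpair
  have hsnd : Primrec fun n : ℕ => n.unpair.2 := Primrec.snd.comp Primrec.unpair
  have := (Primrec.nat_lt.comp (Primrec.const 0) hsnd).and
    (primrecRel_coprime.comp (primrec_int_natAbs.comp ((Primrec.ofNat ℤ).comp hfst)) hsnd)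
  simpa only [range_ratCode] using! this.computablePred

theorem computable_ratCode : Computable ratCode := by
  let : DecidablePred (· ∈ Set.range ratCode) := @decidableRangeEncode ℚ Rat.instEncodable
  let : Infinite (Set.range ratCode) :=
    Infinite.of_injective _ (Equiv.ofInjective _ (@encode_injective ℚ Rat.instEncodable)).injective
  have hdec : ∀ n, ratCode (ofNat ℚ n) = Nat.Subtype.ofNat (Set.range ratCode) n := fun n =>
    congrArg Subtype.val ((@equivRangeEncode ℚ Rat.instEncodable).apply_symm_apply _)
  refine ((computable_subtype_ofNat computablePred_mem_range_ratCode).comp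
    Computable.encode).of_eq fun q => ?_
  rw [← hdec, ofNat_encode]

theorem computable_rat_den : Computable Rat.den :=
  (Computable.snd.comp (Computable.unpair.comp computable_ratCode)).of_eq fun q => by
    simp only [ratCode, Nat.unpair_pair]

theorem computable_rat_num : Computable Rat.num :=
  ((Computable.ofNat ℤ).comp
    (Computable.fst.comp (Computable.unpair.comp computable_ratCode))).of_eq fun q => by
      simp only [ratCode, Nat.unpair_pair, ofNat_encode]

theorem natFloor_natCast_mul_eq_div (n : ℕ) (q : ℚ) : ⌊n * q⌋₊ = n * q.num.toNat / q.den := by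
  rcases le_total 0 q with hq | hq
  · have hnum : ((q.num.toNat : ℕ) : ℚ) = q.num :=
      mod_cast Int.toNat_of_nonneg (Rat.num_nonneg.2 hq)
    rw [← Rat.natFloor_natCast_div_natCast, Nat.cast_mul, mul_div_assoc, hnum, Rat.num_div_den]
  · rw [Int.toNat_of_nonpos (Rat.num_nonpos.2 hq), mul_zero, Nat.zero_div, Nat.floor_of_nonpos]
    exact mul_nonpos_of_nonneg_of_nonpos n.cast_nonneg hq

theorem computable_natFloor_mul : Computable₂ fun (n : ℕ) (q : ℚ) => ⌊n * q⌋₊ := by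
  have hnum : Computable fun p : ℕ × ℚ => p.1 * p.2.num.toNat :=
    Primrec.nat_mul.to_comp.comp Computable.fst
      (primrec_int_toNat.to_comp.comp (computable_rat_num.comp Computable.snd))
  exact (Primrec.nat_div.to_comp.comp hnum (computable_rat_den.comp Computable.snd)).of_eq
    fun p => (natFloor_natCast_mul_eq_div p.1 p.2).symm

theorem eq_natCast_div_succ_iff {q : ℚ} {m n : ℕ} :
    q = m / (n + 1) ↔ 0 ≤ q.num ∧ q.num.natAbs * (n + 1) = m * q.den := by
  have hn : (n : ℚ) + 1 ≠ 0 := n.cast_add_one_ne_zero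
  have hden : (q.den : ℚ) ≠ 0 := mod_cast q.den_nz
  have hcross : q = m / (n + 1) ↔ q.num * (n + 1 : ℤ) = m * q.den := by
    conv_lhs => rw [← Rat.num_div_den q, div_eq_div_iff hden hn]
    norm_cast
  constructor
  · intro h
    have hnonneg : 0 ≤ q.num := Rat.num_nonneg.2 (h ▸ by positivity)
    exact ⟨hnonneg, by zify; rw [abs_of_nonneg hnonneg]; exact hcross.1 h⟩
  · rintro ⟨hnonneg, h⟩
    zify at h
    rw [abs_of_nonneg hnonneg] at h
    exact hcross.2 h

theorem computable_natCast_div_succ : Computable₂ fun m n : ℕ => (m / (n + 1) : ℚ) := by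
  have hnum : Primrec fun r : (ℕ × ℕ) × ℤ × ℕ => r.2.1 := Primrec.fst.comp Primrec.snd
  have hcross : PrimrecPred fun r : (ℕ × ℕ) × ℤ × ℕ =>
      0 ≤ r.2.1 ∧ r.2.1.natAbs * (r.1.2 + 1) = r.1.1 * r.2.2 :=
    (primrecPred_int_nonneg.comp hnum).and <| Primrec.eq.comp
      (Primrec.nat_mul.comp (primrec_int_natAbs.comp hnum)
        (Primrec.succ.comp (Primrec.snd.comp Primrec.fst)))
      (Primrec.nat_mul.comp (Primrec.fst.comp Primrec.fst) (Primrec.snd.comp Primrec.snd))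
  have hparts : Computable fun p : (ℕ × ℕ) × ℚ => (p.1, p.2.num, p.2.den) :=
    Computable.fst.pair ((computable_rat_num.comp Computable.snd).pair
      (computable_rat_den.comp Computable.snd))
  exact computable_of_graph <| hcross.computablePred.computable_of_manyOneReducible
    ⟨_, hparts, fun _ => eq_natCast_div_succ_iff⟩

end Computability

section StableFloors

open Topology

variable {a : ℕ → ℚ} {α : ℝ}

theorem eventually_floor_eq_of_irrational {ι : Type*} {l : Filter ι} {x : ι → ℝ} {β : ℝ}
    (hx : Tendsto x l (𝓝 β)) (hβ : Irrational β) : ∀ᶠ i in l, ⌊x i⌋ = ⌊β⌋ := by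
  have hlt : (⌊β⌋ : ℝ) < β := (Int.floor_le β).lt_of_ne (hβ.ne_int _).symm
  filter_upwards [hx.eventually_mem (Ioo_mem_nhds hlt (Int.lt_floor_add_one β))] with i hi
  exact Int.floor_eq_iff.2 ⟨hi.1.le, hi.2⟩

theorem eventually_natFloor_mul_eq (ha : Tendsto (fun s => (a s : ℝ)) atTop (𝓝 α))
    (hα : Irrational α) (n : ℕ) : ∀ᶠ s in atTop, ⌊n * a s⌋₊ = ⌊n * α⌋₊ := by
  rcases eq_or_ne n 0 with rfl | hn
  · simp
  filter_upwards [eventually_floor_eq_of_irrational (ha.const_mul (n : ℝ)) (hα.natCast_mul hn)]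
    with s hs
  rw [← Int.floor_toNat, ← Int.floor_toNat, ← hs, ← Rat.floor_cast (α := ℝ)]
  norm_cast

theorem abs_sub_lt_one_of_natFloor_eq {x y : ℚ} (hx : 0 ≤ x) (hy : 0 ≤ y) (h : ⌊x⌋₊ = ⌊y⌋₊) :
    |x - y| < 1 :=
  Int.abs_sub_lt_one_of_floor_eq_floor <| by
    rw [← Int.natCast_floor_eq_floor hx, ← Int.natCast_floor_eq_floor hy, h]

theorem natCast_mul_abs_sub_le_one (ha : Tendsto (fun s => (a s : ℝ)) atTop (𝓝 α))
    (hnonneg : ∀ s, 0 ≤ a s) {n s : ℕ} (hfloor : ∀ t ≥ s, ⌊n * a t⌋₊ = ⌊n * a s⌋₊) :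
    n * |α - a s| ≤ 1 := by
  refine le_of_tendsto ((ha.sub_const (a s : ℝ)).abs.const_mul (n : ℝ)) ?_
  filter_upwards [eventually_ge_atTop s] with t ht
  have hlt := abs_sub_lt_one_of_natFloor_eq (mul_nonneg n.cast_nonneg (hnonneg t))
    (mul_nonneg n.cast_nonneg (hnonneg s)) (hfloor t ht)
  rw [← mul_sub, abs_mul, Nat.abs_cast] at hlt
  exact_mod_cast hlt.le

theorem frequently_forall_ge_le {β : Type*} [LinearOrder β] [WellFoundedLT β] (m : ℕ → β) :
    ∃ᶠ s in atTop, ∀ t ≥ s, m s ≤ m t := by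
  refine frequently_atTop.2 fun N => ?_
  obtain ⟨s, hs, hmin⟩ := exists_minimalFor_of_wellFoundedLT (N ≤ ·) m ⟨N, le_rfl⟩
  exact ⟨s, hs, fun t ht => (le_total (m s) (m t)).elim id (hmin (hs.trans ht))⟩

/-- The number of initial scales `g 0, g 1, …` at which `a s` and `a (s + 1)` lie in the same cell
of the grid of mesh `1 / g j`. The search is cut off at `s`, so that it terminates even when
`a (s + 1) = a s`. -/
def floorAgreement (g : ℕ → ℕ) (a : ℕ → ℚ) (s : ℕ) : ℕ :=
  Nat.find (p := fun j => ⌊g j * a s⌋₊ ≠ ⌊g j * a (s + 1)⌋₊ ∨ s ≤ j) ⟨s, Or.inr le_rfl⟩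

variable {g : ℕ → ℕ}

theorem computable_floorAgreement (hg : Computable g) (ha : Computable a) :
    Computable (floorAgreement g a) := by
  have hpred : PrimrecPred fun r : (ℕ × ℕ) × ℕ × ℕ => r.1.1 ≠ r.1.2 ∨ r.2.1 ≤ r.2.2 :=
    (Primrec.eq.comp (Primrec.fst.comp Primrec.fst) (Primrec.snd.comp Primrec.fst)).not.or
      (Primrec.nat_le.comp (Primrec.fst.comp Primrec.snd) (Primrec.snd.comp Primrec.snd))
  have hscale : Computable fun p : ℕ × ℕ => g p.2 := hg.comp Computable.snd
  have hdata : Computable fun p : ℕ × ℕ => ((⌊g p.2 * a p.1⌋₊, ⌊g p.2 * a (p.1 + 1)⌋₊), p) :=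
    ((computable_natFloor_mul.comp hscale (ha.comp Computable.fst)).pair
      (computable_natFloor_mul.comp hscale
        (ha.comp (Computable.succ.comp Computable.fst)))).pair Computable.id
  exact Computable.find
    (hpred.computablePred.computable_of_manyOneReducible ⟨_, hdata, fun _ => Iff.rfl⟩) _

theorem natFloor_succ_eq_of_lt_floorAgreement {j s : ℕ} (hj : j < floorAgreement g a s) :
    ⌊g j * a (s + 1)⌋₊ = ⌊g j * a s⌋₊ :=
  (not_not.1 (not_or.1 (Nat.find_min _ hj)).1).symm

theorem le_floorAgreement {n s : ℕ} (hn : n ≤ s)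
    (hfloor : ∀ j < n, ⌊g j * a s⌋₊ = ⌊g j * a (s + 1)⌋₊) : n ≤ floorAgreement g a s :=
  (Nat.le_find_iff _ _).2 fun j hj => not_or.2 ⟨not_not.2 (hfloor j hj), (hj.trans_le hn).not_ge⟩

theorem tendsto_floorAgreement (ha : Tendsto (fun s => (a s : ℝ)) atTop (𝓝 α))
    (hα : Irrational α) : Tendsto (floorAgreement g a) atTop atTop := by
  refine tendsto_atTop.2 fun n => ?_
  have hfloor : ∀ᶠ s in atTop, ∀ j ∈ Set.Iio n, ⌊g j * a s⌋₊ = ⌊g j * α⌋₊ :=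
    (eventually_all_finite (Set.finite_Iio n)).2 fun j _ => eventually_natFloor_mul_eq ha hα (g j)
  filter_upwards [hfloor, (tendsto_add_atTop_nat 1).eventually hfloor, eventually_ge_atTop n]
    with s hs hs_succ hn
  exact le_floorAgreement hn fun j hj => (hs j hj).trans (hs_succ j hj).symm

theorem natFloor_eq_of_forall_ge_floorAgreement_le {j s : ℕ} (hj : j < floorAgreement g a s)
    (hs : ∀ t ≥ s, floorAgreement g a s ≤ floorAgreement g a t) :
    ∀ t ≥ s, ⌊g j * a t⌋₊ = ⌊g j * a s⌋₊ := by
  intro t ht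
  induction t, ht using Nat.le_induction with
  | base => rfl
  | succ t ht ih =>
    exact (natFloor_succ_eq_of_lt_floorAgreement (hj.trans_le (hs t ht))).trans ih

theorem IsCompApprox.exists_computable_frequently_mul_abs_sub_le (ha : IsCompApprox a α)
    (hα : Irrational α) (hg : Computable g) :
    ∃ m : ℕ → ℕ, Computable m ∧ Tendsto m atTop atTop ∧
      ∃ᶠ s in atTop, ∀ j < m s, g j * |α - a s| ≤ 1 := by
  obtain ⟨hcomp, hmem, hlim⟩ := ha
  refine ⟨floorAgreement g a, computable_floorAgreement hg hcomp,
    tendsto_floorAgreement hlim hα, ?_⟩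
  refine (frequently_forall_ge_le (floorAgreement g a)).mono fun s hs j hj => ?_
  exact natCast_mul_abs_sub_le_one hlim (fun t => (hmem t).1)
    (natFloor_eq_of_forall_ge_floorAgreement_le hj hs)

theorem IsCompApprox.exists_computable_frequently_sq_mul_abs_sub_le (ha : IsCompApprox a α)
    (hα : Irrational α) :
    ∃ m : ℕ → ℕ, Computable m ∧ Tendsto m atTop atTop ∧
      ∃ᶠ s in atTop, m s ^ 2 * |α - a s| ≤ 1 := by
  have hsq : Computable fun j => (j + 1) ^ 2 :=
    (Primrec.nat_mul.comp Primrec.succ Primrec.succ).to_comp.of_eq fun j => (sq (j + 1)).symm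
  obtain ⟨m, hm, hmtop, hclose⟩ := ha.exists_computable_frequently_mul_abs_sub_le hα hsq
  refine ⟨m, hm, hmtop, ?_⟩
  refine (hclose.and_eventually (hmtop.eventually_ge_atTop 1)).mono fun s ⟨hs, hpos⟩ => ?_
  simpa only [Nat.sub_add_cancel hpos, Nat.cast_pow] using hs (m s - 1) (by lia)

end StableFloors

section Interleave

open Topology

/-- The sequence `c 0, a 0, c 1, a 1, …`, in which the successor function leads from each decoy
`c n` to the better value `a n`. -/
def interleave {β : Type*} (c a : ℕ → β) (n : ℕ) : β :=
  bif n.bodd then a n.div2 else c n.div2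

section General

variable {β : Type*} {c a : ℕ → β}

theorem interleave_two_mul (n : ℕ) : interleave c a (2 * n) = c n := by
  simp [interleave]

theorem interleave_two_mul_add_one (n : ℕ) : interleave c a (2 * n + 1) = a n := by
  simp [interleave]

theorem interleave_mem {S : Set β} (hc : ∀ n, c n ∈ S) (ha : ∀ n, a n ∈ S) (n : ℕ) :
    interleave c a n ∈ S := by
  unfold interleave
  cases n.bodd
  exacts [hc _, ha _]

theorem computable_interleave [Primcodable β] (hc : Computable c) (ha : Computable a) :
    Computable (interleave c a) :=
  Computable.cond Computable.nat_bodd (ha.comp Computable.nat_div2) (hc.comp Computable.nat_div2)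

theorem tendsto_interleave {l : Filter β} (hc : Tendsto c atTop l) (ha : Tendsto a atTop l) :
    Tendsto (interleave c a) atTop l := by
  have hdiv : Tendsto Nat.div2 atTop atTop :=
    (Nat.tendsto_div_const_atTop two_ne_zero).congr fun n => (Nat.div2_val n).symm
  refine ((ha.comp hdiv).if' (p := fun n => n.bodd) (hc.comp hdiv)).congr fun n => ?_
  simp [interleave, cond_eq_ite]

end General

variable {c a : ℕ → ℚ} {α : ℝ}

theorem isCompApprox_interleave (hc : IsCompApprox c α) (ha : IsCompApprox a α) :
    IsCompApprox (interleave c a) α :=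
  ⟨computable_interleave hc.1 ha.1, interleave_mem hc.2.1 ha.2.1,
    tendsto_comap_iff.1 (tendsto_interleave (tendsto_comap_iff.2 hc.2.2)
      (tendsto_comap_iff.2 ha.2.2))⟩

theorem isComputableOrder_succ : IsComputableOrder Nat.succ :=
  ⟨Computable.succ, fun _ _ => Nat.succ_le_succ, tendsto_add_atTop_nat 1⟩

theorem isRhoSpeedable_interleave {ρ : ℚ} (hρ : 0 ≤ ρ)
    (h : ∀ ε > (ρ : ℝ), ∃ᶠ s in atTop, |α - a s| ≤ ε * |α - c s|) :
    IsRhoSpeedable (interleave c a) α ρ := by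
  refine Or.inr ⟨Nat.succ, isComputableOrder_succ, ?_⟩
  refine le_of_forall_gt_imp_ge_of_dense fun b hb => ?_
  obtain ⟨ε, hε, hεb⟩ := EReal.lt_iff_exists_real_btwn.1 hb
  refine liminf_le_of_frequently_le' (frequently_atTop.2 fun N => ?_)
  obtain ⟨s, hs, hle⟩ := frequently_atTop.1 (h ε (EReal.coe_lt_coe_iff.1 hε)) N
  refine ⟨2 * s, by omega, le_trans ?_ hεb.le⟩
  rw [EReal.coe_le_coe_iff, Nat.succ_eq_add_one, interleave_two_mul_add_one, interleave_two_mul,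
    abs_div]
  have hεnonneg : 0 ≤ ε := (Rat.cast_nonneg.2 hρ).trans (EReal.coe_lt_coe_iff.1 hε).le
  exact div_le_of_le_mul₀ (abs_nonneg _) hεnonneg hle

end Interleave

section RoundBelow

open Topology

/-- A rounding `⌊n q⌋ / (n + 1)` of `q ≥ 0` that tends to `q` with `n` but is deliberately displaced
downwards, by at least `q / (n + 1)`; plain rounding `⌊n q⌋ / n` could return `q` itself. -/
def roundBelow (n : ℕ) (q : ℚ) : ℚ := ⌊n * q⌋₊ / (n + 1)

theorem computable_roundBelow : Computable₂ roundBelow :=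
  computable_natCast_div_succ.comp computable_natFloor_mul Computable.fst

theorem roundBelow_nonneg (n : ℕ) (q : ℚ) : 0 ≤ roundBelow n q := by
  unfold roundBelow
  positivity

theorem roundBelow_le_sub_div {q : ℚ} (hq : 0 ≤ q) (n : ℕ) :
    roundBelow n q ≤ q - q / (n + 1) := by
  calc roundBelow n q ≤ n * q / (n + 1) := by
        unfold roundBelow
        gcongr
        exact Nat.floor_le (by positivity)
    _ = q - q / (n + 1) := by field_simp; ring

theorem roundBelow_le {q : ℚ} (hq : 0 ≤ q) (n : ℕ) : roundBelow n q ≤ q :=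
  (roundBelow_le_sub_div hq n).trans (sub_le_self _ (by positivity))

theorem sub_div_le_roundBelow (n : ℕ) (q : ℚ) : q - (q + 1) / (n + 1) ≤ roundBelow n q := by
  calc q - (q + 1) / (n + 1) = (n * q - 1) / (n + 1) := by field_simp; ring
    _ ≤ roundBelow n q := by
        unfold roundBelow
        gcongr
        exact (Nat.sub_one_lt_floor _).le

variable {α : ℝ}

theorem abs_sub_le_mul_abs_sub_roundBelow {ε : ℝ} {q : ℚ} {n : ℕ} (hε : 0 < ε) (hq : 0 ≤ q)
    (hclose : n ^ 2 * |α - q| ≤ 1) (hlarge : 2 * (1 + ε) ≤ ε * (n * q)) :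
    |α - q| ≤ ε * |α - roundBelow n q| := by
  have hn : (1 : ℝ) ≤ n := by
    rw [Nat.one_le_cast, Nat.one_le_iff_ne_zero]
    rintro rfl
    simp only [CharP.cast_eq_zero, zero_mul, mul_zero] at hlarge
    linarith
  have hgap : (q / (n + 1) : ℝ) - |α - q| ≤ |α - roundBelow n q| := by
    have hround : (roundBelow n q : ℝ) ≤ q - q / (n + 1) := mod_cast roundBelow_le_sub_div hq n
    linarith [neg_abs_le (α - q), le_abs_self (α - roundBelow n q)]
  have hsmall : (1 + ε) * |α - q| ≤ ε * (q / (n + 1)) := by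
    rw [← mul_div_assoc, le_div_iff₀ (by positivity)]
    refine le_of_mul_le_mul_left ?_ (zero_lt_one.trans_le hn)
    calc n * ((1 + ε) * |α - q| * (n + 1)) ≤ n * ((1 + ε) * |α - q| * (n + n)) := by gcongr
      _ = 2 * (1 + ε) * (n ^ 2 * |α - q|) := by ring
      _ ≤ 2 * (1 + ε) * 1 := by gcongr
      _ ≤ n * (ε * q) := by linarith
  linarith [mul_le_mul_of_nonneg_left hgap hε.le]

variable {a : ℕ → ℚ} {m : ℕ → ℕ}

theorem isCompApprox_roundBelow (hm : Computable m) (hmtop : Tendsto m atTop atTop)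
    (ha : IsCompApprox a α) : IsCompApprox (fun s => roundBelow (m s) (a s)) α := by
  obtain ⟨hcomp, hmem, hlim⟩ := ha
  have hdenom : Tendsto (fun s => (m s : ℝ) + 1) atTop atTop :=
    tendsto_atTop_add_const_right _ _ (tendsto_natCast_atTop_atTop.comp hmtop)
  have hlower : Tendsto (fun s => (a s : ℝ) - (a s + 1) / (m s + 1)) atTop (𝓝 α) := by
    simpa only [sub_zero] using hlim.sub ((hlim.add_const 1).div_atTop hdenom)
  refine ⟨computable_roundBelow.comp hm hcomp, fun s => ⟨roundBelow_nonneg _ _,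
    (roundBelow_le (hmem s).1 _).trans (hmem s).2⟩, ?_⟩
  refine tendsto_of_tendsto_of_tendsto_of_le_of_le hlower hlim (fun s => ?_) fun s => ?_
  · exact mod_cast sub_div_le_roundBelow (m s) (a s)
  · exact Rat.cast_le.2 (roundBelow_le (hmem s).1 (m s))

theorem frequently_abs_sub_le_mul_abs_sub_roundBelow (ha : IsCompApprox a α) (hα : 0 < α)
    (hmtop : Tendsto m atTop atTop) (hclose : ∃ᶠ s in atTop, m s ^ 2 * |α - a s| ≤ 1) {ε : ℝ}
    (hε : 0 < ε) : ∃ᶠ s in atTop, |α - a s| ≤ ε * |α - roundBelow (m s) (a s)| := by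
  have hlarge : Tendsto (fun s => ε * ((m s : ℝ) * a s)) atTop atTop :=
    ((tendsto_natCast_atTop_atTop.comp hmtop).atTop_mul_pos hα ha.2.2).const_mul_atTop hε
  exact (hclose.and_eventually (hlarge.eventually_ge_atTop (2 * (1 + ε)))).mono fun s hs =>
    abs_sub_le_mul_abs_sub_roundBelow hε (ha.2.1 s).1 hs.1 hs.2

end RoundBelow

theorem IsCompApprox.limit_nonneg {a : ℕ → ℚ} {α : ℝ} (ha : IsCompApprox a α) : 0 ≤ α :=
  ge_of_tendsto' ha.2.2 fun s => Rat.cast_nonneg.2 (ha.2.1 s).1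

theorem ca_is_ca_speedable_general (α : ℝ) (hca : ∃ a : ℕ → ℚ, IsCompApprox a α) :
    ∃ a : ℕ → ℚ, IsCompApprox a α ∧ IsRhoSpeedable a α 0 := by
  obtain ⟨a, ha⟩ := hca
  by_cases hrat : ∃ q : ℚ, α = q
  · exact ⟨a, ha, Or.inl hrat⟩
  have hα : Irrational α := fun ⟨q, hq⟩ => hrat ⟨q, hq.symm⟩
  have hpos : 0 < α := ha.limit_nonneg.lt_of_ne' hα.ne_zero
  obtain ⟨m, hm, hmtop, hclose⟩ := ha.exists_computable_frequently_sq_mul_abs_sub_le hα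
  refine ⟨interleave (fun s => roundBelow (m s) (a s)) a,
    isCompApprox_interleave (isCompApprox_roundBelow hm hmtop ha) ha,
    isRhoSpeedable_interleave le_rfl fun ε hε => ?_⟩
  exact frequently_abs_sub_le_mul_abs_sub_roundBelow ha hpos hmtop hclose (by simpa using hε)

theorem ca_is_ca_speedable (α : ℝ) (hα : α ∈ Set.Ioo (0 : ℝ) 1)
    (hca : ∃ a : ℕ → ℚ, IsCompApprox a α) :
    ∃ a : ℕ → ℚ, IsCompApprox a α ∧ IsSpeedable a α := by
  obtain ⟨a, ha, hspeed⟩ := ca_is_ca_speedable_general α hca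
  exact ⟨a, ha, 0, le_rfl, zero_lt_one, hspeed⟩
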